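/- With i, j, k the standard imaginary units of ℍ, the quaternionic Mahler measure of the ∗-product (q − i) ∗ (q − j), i.e. of the slice regular polynomial q ↦ q² − q(i + j) + k, equals π/2 − 1. -/

import Mathlib

open MeasureTheory Quaternion

noncomputable instance : MeasurableSpace (Quaternion ℝ) := borel _
instance : BorelSpace (Quaternion ℝ) := ⟨rfl⟩
instance : Nonempty (Metric.sphere (0 : Quaternion ℝ) 1) := ⟨⟨1, by simp⟩⟩

/-- The probability Haar measure `μ` on the group `T¹(ℍ)` of unit quaternions
(the Haar measure normalized so that the whole group has measure `1`). -/
noncomputable def muH : Measure (Metric.sphere (0 : Quaternion ℝ) 1) :=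
  Measure.haarMeasure ⊤

/-- The quaternionic Mahler measure `m_ℍ(f) = ∫_{T¹(ℍ)} log |f(q)| dμ(q)`. -/
noncomputable def mahlerH (f : Quaternion ℝ → Quaternion ℝ) : ℝ :=
  ∫ q : Metric.sphere (0 : Quaternion ℝ) 1, Real.log ‖f q‖ ∂muH
/-- The standard imaginary unit `i` of the quaternions. -/
noncomputable def qI : Quaternion ℝ := ⟨0, 1, 0, 0⟩
/-- The standard imaginary unit `j` of the quaternions. -/
noncomputable def qJ : Quaternion ℝ := ⟨0, 0, 1, 0⟩
/-- The standard imaginary unit `k` of the quaternions. -/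
noncomputable def qK : Quaternion ℝ := ⟨0, 0, 0, 1⟩

open Set Metric
open scoped ENNReal Pointwise

instance : IsProbabilityMeasure muH :=
  ⟨Measure.haarMeasure_self (K₀ := ⊤)⟩

instance : muH.IsHaarMeasure := by unfold muH; infer_instance

instance : muH.IsMulRightInvariant where
  map_mul_right_eq_self g := by
    have : IsProbabilityMeasure (muH.map (· * g)) :=
      Measure.isProbabilityMeasure_map (measurable_mul_const g).aemeasurable
    have h := Measure.haarMeasure_unique (muH.map (· * g)) ⊤
    rw [TopologicalSpace.PositiveCompacts.coe_top, measure_univ, one_smul] at h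
    exact h

/-- Left multiplication by a unit quaternion as a linear isometry. -/
noncomputable def mulLeftIsometry (u : sphere (0 : ℍ) 1) : ℍ ≃ₗᵢ[ℝ] ℍ :=
  LinearIsometry.toLinearIsometryEquiv
    ⟨LinearMap.mulLeft ℝ (u : ℍ), fun x => by simp⟩ rfl

theorem mulLeftIsometry_apply (u : sphere (0 : ℍ) 1) (x : ℍ) :
    mulLeftIsometry u x = u * x := rfl

instance : (volume : Measure ℍ).toSphere.IsMulLeftInvariant where
  map_mul_left_eq_self u := by
    ext s hs
    rw [Measure.map_apply (measurable_const_mul u) hs,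
      Measure.toSphere_apply' _ (measurable_const_mul u hs), Measure.toSphere_apply' _ hs,
      ← (mulLeftIsometry u).measurePreserving.measure_preimage_equiv
        (f := (mulLeftIsometry u).toMeasurableEquiv) (Ioo (0 : ℝ) 1 • (Subtype.val '' s))]
    congr 2
    ext x
    simp only [mem_smul, mem_image, mem_preimage, LinearIsometryEquiv.coe_toMeasurableEquiv,
      mulLeftIsometry_apply]
    constructor
    · rintro ⟨t, ht, _, ⟨q, hq, rfl⟩, rfl⟩
      exact ⟨t, ht, _, ⟨u * q, hq, rfl⟩, by simp⟩
    · rintro ⟨t, ht, _, ⟨q, hq, rfl⟩, h⟩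
      refine ⟨t, ht, _, ⟨u⁻¹ * q, by simpa using hq, rfl⟩, ?_⟩
      have hu : (u : ℍ) ≠ 0 := ne_zero_of_mem_unit_sphere u
      rw [← mul_right_inj' hu, ← h]
      simp [mul_inv_cancel_left₀ hu]

theorem toSphere_eq_smul_muH :
    (volume : Measure ℍ).toSphere = (volume : Measure ℍ).toSphere univ • muH :=
  Measure.haarMeasure_unique (volume : Measure ℍ).toSphere ⊤

/-- Radial and angular parts of an integral over `ℍ` separate. -/
theorem exists_lintegral_radial_mul_angular {g : ℝ → ℝ≥0∞} (hg : Measurable g) :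
    ∃ C, ∀ F : ℍ → ℝ≥0∞, Measurable F →
      ∫⁻ x : ℍ, g ‖x‖ * F (‖x‖⁻¹ • x) = C * ∫⁻ q : sphere (0 : ℍ) 1, F q ∂muH := by
  refine ⟨(∫⁻ r, g r ∂(Measure.volumeIoiPow (Module.finrank ℝ ℍ - 1))) *
    (volume : Measure ℍ).toSphere univ, fun F hF => ?_⟩
  have hm := (volume : Measure ℍ).measurePreserving_homeomorphUnitSphereProd
  rw [mul_assoc, ← smul_eq_mul (a := Measure.toSphere _ _), ← lintegral_smul_measure,
    ← toSphere_eq_smul_muH, mul_comm]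
  rw [← lintegral_prod_mul (by fun_prop) (by fun_prop),
    ← hm.lintegral_comp_emb (Homeomorph.measurableEmbedding _)]
  conv_lhs => rw [← restrict_compl_singleton (μ := (volume : Measure ℍ)) 0,
    ← lintegral_subtype_comap (measurableSet_singleton _).compl]
  refine lintegral_congr fun x => ?_
  simp [mul_comm]

/-- The coordinates `(a, b, c + d i) ↦ a + b i + c j + d k` on the quaternions. -/
noncomputable def coordEquiv : (ℝ × ℝ × ℂ) ≃L[ℝ] ℍ :=
  LinearEquiv.toContinuousLinearEquiv
  { toFun := fun p => ⟨p.1, p.2.1, p.2.2.re, p.2.2.im⟩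
    invFun := fun q => (q.re, q.imI, ⟨q.imJ, q.imK⟩)
    map_add' := fun _ _ => rfl
    map_smul' := fun c p => by apply Quaternion.ext <;> simp <;> rfl
    left_inv := fun _ => rfl
    right_inv := fun _ => rfl }

theorem norm_coordEquiv (p : ℝ × ℝ × ℂ) :
    ‖coordEquiv p‖ = √(p.1 ^ 2 + p.2.1 ^ 2 + ‖p.2.2‖ ^ 2) := by
  rw [eq_comm, Real.sqrt_eq_iff_mul_self_eq (by positivity) (by positivity),
    ← Quaternion.normSq_eq_norm_mul_self, Quaternion.normSq_def', Complex.sq_norm,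
    Complex.normSq_apply]
  change _ = p.1 ^ 2 + p.2.1 ^ 2 + p.2.2.re ^ 2 + p.2.2.im ^ 2
  ring

theorem exists_lintegral_coord_radial_mul {g : ℝ → ℝ≥0∞} (hg : Measurable g) :
    ∃ C, ∀ G : ℝ → ℝ → ℝ≥0∞, Measurable (Function.uncurry G) →
      ∫⁻ a : ℝ, ∫⁻ b : ℝ, ∫⁻ w : ℂ, g (√(a ^ 2 + b ^ 2 + ‖w‖ ^ 2)) *
        G (a / √(a ^ 2 + b ^ 2 + ‖w‖ ^ 2)) (b / √(a ^ 2 + b ^ 2 + ‖w‖ ^ 2)) =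
      C * ∫⁻ q : sphere (0 : ℍ) 1, G (q : ℍ).re (q : ℍ).imI ∂muH := by
  obtain ⟨C, hC⟩ := exists_lintegral_radial_mul_angular hg
  let m : Measure (ℝ × ℝ × ℂ) := volume.prod (volume.prod volume)
  have : m.IsAddHaarMeasure := Measure.prod.instIsAddHaarMeasure _ _
  have : (m.map coordEquiv).IsAddHaarMeasure := coordEquiv.isAddHaarMeasure_map m
  obtain ⟨c, hm⟩ : ∃ c : NNReal, m.map coordEquiv = c • volume :=
    ⟨_, Measure.isAddLeftInvariant_eq_smul (m.map coordEquiv) volume⟩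
  refine ⟨c * C, fun G hG => ?_⟩
  have hF : Measurable fun x : ℍ => G x.re x.imI :=
    hG.comp (Quaternion.continuous_re.measurable.prodMk Quaternion.continuous_imI.measurable)
  have hFm : Measurable fun x : ℍ => g ‖x‖ * G (‖x‖⁻¹ • x).re (‖x‖⁻¹ • x).imI := by
    refine (hg.comp measurable_norm).mul (hF.comp ?_)
    exact measurable_norm.inv.smul measurable_id
  have hG' : Measurable fun p : ℝ × ℝ => G p.1 p.2 := hG
  have hmeas : Measurable fun p : ℝ × ℝ × ℂ => g (√(p.1 ^ 2 + p.2.1 ^ 2 + ‖p.2.2‖ ^ 2)) *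
        G (p.1 / √(p.1 ^ 2 + p.2.1 ^ 2 + ‖p.2.2‖ ^ 2))
          (p.2.1 / √(p.1 ^ 2 + p.2.1 ^ 2 + ‖p.2.2‖ ^ 2)) :=
    (hg.comp (by fun_prop)).mul
      (hG'.comp (f := fun p : ℝ × ℝ × ℂ => (p.1 / √(p.1 ^ 2 + p.2.1 ^ 2 + ‖p.2.2‖ ^ 2),
          p.2.1 / √(p.1 ^ 2 + p.2.1 ^ 2 + ‖p.2.2‖ ^ 2))) (by fun_prop))
  rw [mul_assoc, ← hC _ hF]
  trans ∫⁻ x, g ‖x‖ * G (‖x‖⁻¹ • x).re (‖x‖⁻¹ • x).imI ∂(m.map coordEquiv)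
  · rw [lintegral_map hFm coordEquiv.continuous.measurable]
    have hpt : ∀ p : ℝ × ℝ × ℂ, g ‖coordEquiv p‖ * G (‖coordEquiv p‖⁻¹ • coordEquiv p).re
        (‖coordEquiv p‖⁻¹ • coordEquiv p).imI = g (√(p.1 ^ 2 + p.2.1 ^ 2 + ‖p.2.2‖ ^ 2)) *
        G (p.1 / √(p.1 ^ 2 + p.2.1 ^ 2 + ‖p.2.2‖ ^ 2))
          (p.2.1 / √(p.1 ^ 2 + p.2.1 ^ 2 + ‖p.2.2‖ ^ 2)) := fun p => by
      simp only [norm_coordEquiv, Quaternion.re_smul, Quaternion.imI_smul, smul_eq_mul,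
        div_eq_inv_mul]
      rfl
    simp only [hpt]
    rw [lintegral_prod _ hmeas.aemeasurable]
    refine lintegral_congr fun a => ?_
    exact (lintegral_prod _ (hmeas.comp (measurable_prodMk_left (x := a))).aemeasurable).symm
  · rw [hm, lintegral_smul_measure]
    rfl

open Real in
/-- Polar coordinates on the upper half plane. -/
theorem lintegral_upperHalfPlane_polar {f : ℝ → ℝ → ℝ≥0∞} (hf : Measurable (Function.uncurry f)) :
    ∫⁻ b : ℝ, ∫⁻ ρ in Ioi (0 : ℝ), f b ρ =
      ∫⁻ R in Ioi (0 : ℝ), ∫⁻ β in Ioo 0 π,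
        ENNReal.ofReal R * f (R * cos β) (R * sin β) := by
  have hf' : Measurable fun p : ℝ × ℝ => f p.1 p.2 := hf
  let F : ℝ × ℝ → ℝ≥0∞ := (univ ×ˢ Ioi (0 : ℝ)).indicator fun p => f p.1 p.2
  have hF : Measurable F := hf'.indicator (MeasurableSet.univ.prod measurableSet_Ioi)
  have h := lintegral_comp_polarCoord_symm F
  have hm : Measurable fun p : ℝ × ℝ => ENNReal.ofReal p.1 • F (polarCoord.symm p) := by
    refine (ENNReal.measurable_ofReal.comp measurable_fst).mul (hF.comp ?_)
    exact continuous_polarCoord_symm.measurable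
  rw [polarCoord_target, Measure.volume_eq_prod, ← Measure.prod_restrict,
    lintegral_prod _ hm.aemeasurable, lintegral_prod _ hF.aemeasurable] at h
  have hl : ∀ b : ℝ, ∫⁻ ρ : ℝ, F (b, ρ) = ∫⁻ ρ in Ioi (0 : ℝ), f b ρ := fun b => by
    rw [← lintegral_indicator measurableSet_Ioi]
    refine lintegral_congr fun ρ => ?_
    simp [F, indicator]
  simp only [hl] at h
  rw [← h]
  refine setLIntegral_congr_fun measurableSet_Ioi fun R hR => ?_
  rw [← lintegral_indicator measurableSet_Ioo, ← lintegral_indicator measurableSet_Ioo]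
  refine lintegral_congr fun β => ?_
  have hR : 0 < R := hR
  by_cases h1 : β ∈ Ioo (-π) π
  · rw [indicator_of_mem h1]
    by_cases h2 : 0 < β
    · have : 0 < sin β := sin_pos_of_pos_of_lt_pi h2 h1.2
      have h3 : β ∈ Ioo 0 π := ⟨h2, h1.2⟩
      rw [indicator_of_mem h3]
      simp [F, polarCoord_symm_apply, hR, this]
    · have : sin β ≤ 0 := sin_nonpos_of_nonpos_of_neg_pi_le (not_lt.1 h2) h1.1.le
      have h3 : β ∉ Ioo 0 π := fun h => h2 h.1
      have h4 : ¬ 0 < R * sin β := not_lt.2 (mul_nonpos_of_nonneg_of_nonpos hR.le this)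
      rw [indicator_of_notMem h3]
      simp [F, polarCoord_symm_apply, h4]
  · have h3 : β ∉ Ioo 0 π := fun h => h1 ⟨by linarith [h.1, pi_pos], h.2⟩
    rw [indicator_of_notMem h1, indicator_of_notMem h3]

open Real in
theorem lintegral_complex_radial {h : ℝ → ℝ≥0∞} (hh : Measurable h) :
    ∫⁻ w : ℂ, h ‖w‖ = ENNReal.ofReal (2 * π) * ∫⁻ ρ in Ioi (0 : ℝ), ENNReal.ofReal ρ * h ρ := by
  rw [← Complex.lintegral_comp_polarCoord_symm, polarCoord_target, Measure.volume_eq_prod,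
    ← Measure.prod_restrict]
  have hm : Measurable fun p : ℝ × ℝ => ENNReal.ofReal p.1 * h |p.1| := by fun_prop
  simp only [Complex.norm_polarCoord_symm, smul_eq_mul]
  rw [lintegral_prod _ hm.aemeasurable]
  simp only [lintegral_const, Measure.restrict_apply MeasurableSet.univ, univ_inter, volume_Ioo]
  rw [lintegral_mul_const _ (by fun_prop), mul_comm, sub_neg_eq_add, ← two_mul]
  congr 1
  refine setLIntegral_congr_fun measurableSet_Ioi fun R hR => ?_
  simp only [abs_of_pos hR.out]

open Real in
theorem lintegral_coord_radial_mul {g : ℝ → ℝ≥0∞} (hg : Measurable g)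
    {G : ℝ → ℝ → ℝ≥0∞} (hG : Measurable (Function.uncurry G)) :
    ∫⁻ a : ℝ, ∫⁻ b : ℝ, ∫⁻ w : ℂ, g (√(a ^ 2 + b ^ 2 + ‖w‖ ^ 2)) *
        G (a / √(a ^ 2 + b ^ 2 + ‖w‖ ^ 2)) (b / √(a ^ 2 + b ^ 2 + ‖w‖ ^ 2)) =
      ENNReal.ofReal (2 * π) * ((∫⁻ r in Ioi (0 : ℝ), ENNReal.ofReal (r ^ 3) * g r) *
        ∫⁻ θ in Ioo 0 π, ∫⁻ β in Ioo 0 π,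
          ENNReal.ofReal (sin θ ^ 2 * sin β) * G (cos θ) (sin θ * cos β)) := by
  have hG' : Measurable fun p : ℝ × ℝ => G p.1 p.2 := hG
  have hH : Measurable fun p : ℝ × ℝ × ℝ => g (√(p.1 ^ 2 + p.2.1 ^ 2 + p.2.2 ^ 2)) *
        G (p.1 / √(p.1 ^ 2 + p.2.1 ^ 2 + p.2.2 ^ 2))
          (p.2.1 / √(p.1 ^ 2 + p.2.1 ^ 2 + p.2.2 ^ 2)) :=
    (hg.comp (by fun_prop)).mul
      (hG'.comp (f := fun p : ℝ × ℝ × ℝ => (p.1 / √(p.1 ^ 2 + p.2.1 ^ 2 + p.2.2 ^ 2),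
          p.2.1 / √(p.1 ^ 2 + p.2.1 ^ 2 + p.2.2 ^ 2))) (by fun_prop))
  let H : ℝ → ℝ → ℝ → ℝ≥0∞ := fun a b ρ => g (√(a ^ 2 + b ^ 2 + ρ ^ 2)) *
        G (a / √(a ^ 2 + b ^ 2 + ρ ^ 2)) (b / √(a ^ 2 + b ^ 2 + ρ ^ 2))
  replace hH : Measurable fun p : ℝ × ℝ × ℝ => H p.1 p.2.1 p.2.2 := hH
  have hHc : ∀ {α : Type} [MeasurableSpace α] {u v w : α → ℝ}, Measurable u → Measurable v →
      Measurable w → Measurable fun x => H (u x) (v x) (w x) := fun hu hv hw =>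
    hH.comp (hu.prodMk (hv.prodMk hw))
  have hw : ∀ a b : ℝ, ∫⁻ w : ℂ, H a b ‖w‖ =
      ENNReal.ofReal (2 * π) * ∫⁻ ρ in Ioi (0 : ℝ), ENNReal.ofReal ρ * H a b ρ := fun a b =>
    lintegral_complex_radial (hHc measurable_const measurable_const measurable_id)
  have hb : ∀ a : ℝ, ∫⁻ b : ℝ, ∫⁻ w : ℂ, H a b ‖w‖ = ENNReal.ofReal (2 * π) *
      ∫⁻ R in Ioi (0 : ℝ), ∫⁻ β in Ioo 0 π, ENNReal.ofReal R *
        (ENNReal.ofReal (R * sin β) * H a (R * cos β) (R * sin β)) := fun a => by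
    simp only [hw]
    have hm : Measurable fun p : ℝ × ℝ => ENNReal.ofReal p.2 * H a p.1 p.2 := by
      have := hHc (u := fun _ : ℝ × ℝ => a) measurable_const measurable_fst measurable_snd
      fun_prop
    rw [lintegral_const_mul _ (Measurable.lintegral_prod_right' hm),
      lintegral_upperHalfPlane_polar (f := fun b ρ => ENNReal.ofReal ρ * H a b ρ) hm]
  let F : ℝ → ℝ → ℝ≥0∞ := fun a R => ∫⁻ β in Ioo 0 π, ENNReal.ofReal R *
        (ENNReal.ofReal (R * sin β) * H a (R * cos β) (R * sin β))
  have hF : Measurable fun p : ℝ × ℝ => F p.1 p.2 := by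
    refine Measurable.lintegral_prod_right' (f := fun x : (ℝ × ℝ) × ℝ => ENNReal.ofReal x.1.2 *
        (ENNReal.ofReal (x.1.2 * sin x.2) * H x.1.1 (x.1.2 * cos x.2) (x.1.2 * sin x.2))) ?_
    have := hHc (u := fun x : (ℝ × ℝ) × ℝ => x.1.1) (v := fun x => x.1.2 * cos x.2)
      (w := fun x => x.1.2 * sin x.2) (by fun_prop) (by fun_prop) (by fun_prop)
    fun_prop
  change ∫⁻ a : ℝ, ∫⁻ b : ℝ, ∫⁻ w : ℂ, H a b ‖w‖ = _
  simp only [hb]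
  change ∫⁻ a : ℝ, ENNReal.ofReal (2 * π) * ∫⁻ R in Ioi (0 : ℝ), F a R = _
  rw [lintegral_const_mul _ (Measurable.lintegral_prod_right' hF),
    lintegral_upperHalfPlane_polar (f := F) hF]
  congr 1
  rw [← lintegral_mul_const _ (by fun_prop)]
  refine setLIntegral_congr_fun measurableSet_Ioi fun r hr => ?_
  have hr : 0 < r := hr
  have hJ : Measurable fun θ : ℝ => ∫⁻ β in Ioo 0 π,
      ENNReal.ofReal (sin θ ^ 2 * sin β) * G (cos θ) (sin θ * cos β) := by
    refine Measurable.lintegral_prod_right' (f := fun x : ℝ × ℝ =>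
      ENNReal.ofReal (sin x.1 ^ 2 * sin x.2) * G (cos x.1) (sin x.1 * cos x.2)) ?_
    have := hG'.comp (f := fun x : ℝ × ℝ => (cos x.1, sin x.1 * cos x.2)) (by fun_prop)
    exact Measurable.mul (by fun_prop) this
  rw [← lintegral_const_mul _ hJ]
  refine setLIntegral_congr_fun measurableSet_Ioo fun θ hθ => ?_
  have hs : 0 < sin θ := sin_pos_of_pos_of_lt_pi hθ.1 hθ.2
  have hJ' : Measurable fun β : ℝ =>
      ENNReal.ofReal (sin θ ^ 2 * sin β) * G (cos θ) (sin θ * cos β) := by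
    have := hG'.comp (f := fun x : ℝ => (cos θ, sin θ * cos x)) (by fun_prop)
    exact Measurable.mul (by fun_prop) this
  have hFm : Measurable fun β : ℝ => ENNReal.ofReal (r * sin θ) *
        (ENNReal.ofReal (r * sin θ * sin β) *
          H (r * cos θ) (r * sin θ * cos β) (r * sin θ * sin β)) := by
    have := hHc (u := fun x : ℝ => r * cos θ) (v := fun x => r * sin θ * cos x)
      (w := fun x => r * sin θ * sin x) (by fun_prop) (by fun_prop) (by fun_prop)
    fun_prop
  rw [← lintegral_const_mul _ hJ', ← lintegral_const_mul _ hFm]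
  refine setLIntegral_congr_fun measurableSet_Ioo fun β hβ => ?_
  have hsq : √((r * cos θ) ^ 2 + (r * sin θ * cos β) ^ 2 + (r * sin θ * sin β) ^ 2) = r := by
    rw [show (r * cos θ) ^ 2 + (r * sin θ * cos β) ^ 2 + (r * sin θ * sin β) ^ 2 =
      r ^ 2 * (cos θ ^ 2 + sin θ ^ 2 * (cos β ^ 2 + sin β ^ 2)) by ring, cos_sq_add_sin_sq,
      mul_one, cos_sq_add_sin_sq, mul_one, sqrt_sq hr.le]
  have h1 : r * cos θ / r = cos θ := by field_simp
  have h2 : r * sin θ * cos β / r = sin θ * cos β := by field_simp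
  simp only [H, hsq, h1, h2]
  have hsb : 0 < sin β := sin_pos_of_pos_of_lt_pi hβ.1 hβ.2
  have hR : ENNReal.ofReal r * (ENNReal.ofReal (r * sin θ) * ENNReal.ofReal (r * sin θ * sin β)) =
      ENNReal.ofReal (r ^ 3) * ENNReal.ofReal (sin θ ^ 2 * sin β) := by
    rw [← ENNReal.ofReal_mul (by positivity), ← ENNReal.ofReal_mul (by positivity),
      ← ENNReal.ofReal_mul (by positivity)]
    congr 1
    ring
  rw [mul_mul_mul_comm, ← hR]
  ring

open Real in
/-- Haar integration of a function of two coordinates, in spherical coordinates. -/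
theorem lintegral_muH_spherical {G : ℝ → ℝ → ℝ≥0∞} (hG : Measurable (Function.uncurry G)) :
    ENNReal.ofReal π * ∫⁻ q : sphere (0 : ℍ) 1, G (q : ℍ).re (q : ℍ).imI ∂muH =
      ∫⁻ θ in Ioo 0 π, ∫⁻ β in Ioo 0 π,
          ENNReal.ofReal (sin θ ^ 2 * sin β) * G (cos θ) (sin θ * cos β) := by
  let g : ℝ → ℝ≥0∞ := (Ioo 0 1).indicator fun r => (ENNReal.ofReal (r ^ 3))⁻¹
  have hg : Measurable g := Measurable.indicator (by fun_prop) measurableSet_Ioo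
  have hgi : ∫⁻ r in Ioi (0 : ℝ), ENNReal.ofReal (r ^ 3) * g r = 1 := by
    have : ∀ r, ENNReal.ofReal (r ^ 3) * g r = (Ioo (0 : ℝ) 1).indicator 1 r := fun r => by
      by_cases h : r ∈ Ioo (0 : ℝ) 1
      · have h0 : 0 < r ^ 3 := pow_pos h.1 3
        simp only [g, indicator_of_mem h, Pi.one_apply]
        exact ENNReal.mul_inv_cancel (by simpa using h0) ENNReal.ofReal_ne_top
      · simp [g, indicator_of_notMem h]
    simp only [this]
    rw [lintegral_indicator_one measurableSet_Ioo, Measure.restrict_apply measurableSet_Ioo,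
      inter_eq_left.2 fun x hx => hx.1]
    simp
  obtain ⟨C, hC⟩ := exists_lintegral_coord_radial_mul hg
  have hkey : ∀ G : ℝ → ℝ → ℝ≥0∞, Measurable (Function.uncurry G) → _ := fun G hG =>
    (hC G hG).symm.trans (lintegral_coord_radial_mul hg hG)
  simp only [hgi, one_mul] at hkey
  have h1 := hkey (fun _ _ => 1) measurable_const
  have hβ : ∫⁻ β in Ioo 0 π, ENNReal.ofReal (sin β) = 2 := by
    rw [← ofReal_integral_eq_lintegral_ofReal, ← integral_Ioc_eq_integral_Ioo,
      ← intervalIntegral.integral_of_le pi_pos.le, integral_sin]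
    · norm_num
    · exact (continuous_sin.integrableOn_Icc).mono_set Ioo_subset_Icc_self
    · filter_upwards [ae_restrict_mem measurableSet_Ioo] with β hβ
      exact (sin_pos_of_pos_of_lt_pi hβ.1 hβ.2).le
  have hθ : ∫⁻ θ in Ioo 0 π, ENNReal.ofReal (sin θ ^ 2) = ENNReal.ofReal (π / 2) := by
    rw [← ofReal_integral_eq_lintegral_ofReal, ← integral_Ioc_eq_integral_Ioo,
      ← intervalIntegral.integral_of_le pi_pos.le, integral_sin_sq]
    · norm_num
    · exact (continuous_sin.pow 2 |>.integrableOn_Icc).mono_set Ioo_subset_Icc_self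
    · exact Filter.Eventually.of_forall fun θ => sq_nonneg _
  have h2 : C = ENNReal.ofReal (2 * π) * ENNReal.ofReal π := by
    simp only [mul_one, lintegral_const, measure_univ] at h1
    rw [h1]
    congr 1
    simp only [ENNReal.ofReal_mul (sq_nonneg _)]
    calc _ = ∫⁻ θ in Ioo 0 π, ENNReal.ofReal (sin θ ^ 2) * 2 := by
          refine lintegral_congr fun θ => ?_
          rw [lintegral_const_mul _ (by fun_prop), hβ]
      _ = _ := by
          rw [lintegral_mul_const _ (by fun_prop), hθ, ← ENNReal.ofReal_ofNat 2,
            ← ENNReal.ofReal_mul (by positivity)]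
          congr 1
          ring
  have h3 := hkey G hG
  rw [h2, mul_assoc] at h3
  exact (ENNReal.mul_right_inj (by simp [pi_pos]) ENNReal.ofReal_ne_top).1 h3

theorem lintegral_muH_conj {F : sphere (0 : ℍ) 1 → ℝ≥0∞} (hF : Measurable F) :
    ∫⁻ q, F q ∂muH = ∫⁻ q, ∫⁻ p, F (p * q * p⁻¹) ∂muH ∂muH := by
  have hm : Measurable fun x : sphere (0 : ℍ) 1 × sphere (0 : ℍ) 1 => F (x.2 * x.1 * x.2⁻¹) :=
    hF.comp (by fun_prop)
  rw [lintegral_lintegral_swap hm.aemeasurable]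
  have h : ∀ p, ∫⁻ q, F (p * q * p⁻¹) ∂muH = ∫⁻ q, F q ∂muH := fun p => by
    rw [lintegral_mul_left_eq_self (fun q => F (q * p⁻¹)), lintegral_mul_right_eq_self]
  simp [h]

theorem re_conj_unit (p q : sphere (0 : ℍ) 1) :
    ((p * q * p⁻¹ : sphere (0 : ℍ) 1) : ℍ).re = (q : ℍ).re := by
  have hp : (p : ℍ) ≠ 0 := ne_zero_of_mem_unit_sphere p
  have hc : ∀ x y : ℍ, (x * y).re = (y * x).re := fun x y => by
    simp only [Quaternion.re_mul]; ring
  rw [unitSphere.coe_mul, hc, unitSphere.coe_inv]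
  simp [inv_mul_cancel_left₀ hp]

theorem exists_conj_rotation (a : ℝ) : ∃ g : sphere (0 : ℍ) 1, ∀ q : sphere (0 : ℍ) 1,
    (q : ℍ).re = a → -((g * q * g⁻¹ : sphere (0 : ℍ) 1) : ℍ).imI +
      ((g * q * g⁻¹ : sphere (0 : ℍ) 1) : ℍ).re * ((g * q * g⁻¹ : sphere (0 : ℍ) 1) : ℍ).imK =
      -(√(1 + a ^ 2) * (q : ℍ).imI) := by
  let φ := Real.arctan a / 2
  let x := Real.cos φ
  let y := Real.sin φ
  have hxy : x ^ 2 + y ^ 2 = 1 := Real.cos_sq_add_sin_sq φ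
  have hs : √(1 + a ^ 2) ^ 2 = 1 + a ^ 2 := Real.sq_sqrt (by positivity)
  have hs0 : √(1 + a ^ 2) ≠ 0 := by positivity
  have h1 : x ^ 2 - y ^ 2 = 1 / √(1 + a ^ 2) := by
    rw [← Real.cos_arctan, show Real.arctan a = 2 * φ by simp only [φ]; ring, Real.cos_two_mul']
  have h2 : 2 * x * y = a / √(1 + a ^ 2) := by
    rw [← Real.sin_arctan, show Real.arctan a = 2 * φ by simp only [φ]; ring, Real.sin_two_mul]
    ring
  obtain ⟨g, hg0, hg1, hg2, hg3⟩ : ∃ g : ℍ, g.re = x ∧ g.imI = 0 ∧ g.imJ = y ∧ g.imK = 0 :=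
    ⟨⟨x, 0, y, 0⟩, rfl, rfl, rfl, rfl⟩
  have hn : Quaternion.normSq g = 1 := by
    rw [Quaternion.normSq_def', hg0, hg1, hg2, hg3]
    linarith
  have hg : g ∈ sphere (0 : ℍ) 1 := by
    rw [mem_sphere_zero_iff_norm, ← sq_eq_sq₀ (norm_nonneg _) zero_le_one, sq,
      ← Quaternion.normSq_eq_norm_mul_self, hn, one_pow]
  refine ⟨⟨g, hg⟩, fun q hq => ?_⟩
  have hgi : g⁻¹ = star g := inv_eq_of_mul_eq_one_right (by simp [Quaternion.self_mul_star, hn])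
  rw [re_conj_unit, hq]
  simp only [unitSphere.coe_mul, unitSphere.coe_inv, hgi, Quaternion.imI_mul, Quaternion.imK_mul,
    Quaternion.re_mul, Quaternion.imJ_mul, Quaternion.re_star, Quaternion.imI_star,
    Quaternion.imJ_star, Quaternion.imK_star, hg0, hg1, hg2, hg3]
  have h5 : a * (x ^ 2 - y ^ 2) = 2 * x * y := by rw [h1, h2]; field_simp
  have h6 : (x ^ 2 - y ^ 2) + a * (2 * x * y) = √(1 + a ^ 2) := by
    rw [h1, h2]; field_simp; rw [hs]
  linear_combination (q : ℍ).imK * h5 - (q : ℍ).imI * h6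

/-- By conjugation invariance, `-b + a d` has the same distribution as `-√(1 + a²) b`. -/
theorem lintegral_muH_comp_replace {l : ℝ → ℝ≥0∞} (hl : Measurable l) :
    ∫⁻ q : sphere (0 : ℍ) 1, l (-(q : ℍ).imI + (q : ℍ).re * (q : ℍ).imK) ∂muH =
      ∫⁻ q : sphere (0 : ℍ) 1, l (-(√(1 + (q : ℍ).re ^ 2) * (q : ℍ).imI)) ∂muH := by
  have hre : Measurable fun q : sphere (0 : ℍ) 1 => (q : ℍ).re :=
    (Quaternion.continuous_re.comp continuous_subtype_val).measurable
  have hI : Measurable fun q : sphere (0 : ℍ) 1 => (q : ℍ).imI :=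
    (Quaternion.continuous_imI.comp continuous_subtype_val).measurable
  have hK : Measurable fun q : sphere (0 : ℍ) 1 => (q : ℍ).imK :=
    (Quaternion.continuous_imK.comp continuous_subtype_val).measurable
  have h1 : Measurable fun q : sphere (0 : ℍ) 1 =>
      l (-(q : ℍ).imI + (q : ℍ).re * (q : ℍ).imK) := by fun_prop
  have h2 : Measurable fun q : sphere (0 : ℍ) 1 =>
      l (-(√(1 + (q : ℍ).re ^ 2) * (q : ℍ).imI)) := by fun_prop
  rw [lintegral_muH_conj h1, lintegral_muH_conj h2]
  refine lintegral_congr fun q => ?_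
  obtain ⟨g, hg⟩ := exists_conj_rotation (q : ℍ).re
  rw [← lintegral_mul_left_eq_self _ g]
  refine lintegral_congr fun p => ?_
  have h3 : g * p * q * (g * p)⁻¹ = g * (p * q * p⁻¹) * g⁻¹ := by group
  rw [h3, hg _ (re_conj_unit p q), re_conj_unit p q]

/-- The circle average of `(1 - Re z) Re L(z)` for `L` holomorphic near the closed unit disc. -/
theorem circleAverage_one_sub_re_mul_re {L : ℂ → ℂ} {U : Set ℂ} (hU : IsOpen U)
    (hsub : closedBall (0 : ℂ) 1 ⊆ U) (hL : DifferentiableOn ℂ L U) :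
    Real.circleAverage (fun z => (1 - z.re) * (L z).re) 0 1 = (L 0).re - (deriv L 0).re / 2 := by
  let h : ℂ → ℂ := fun z =>
    L z - (z * L z + dslope L 0 z + z * (starRingEnd ℂ) (L 0)) / 2
  have h0 : U ∈ nhds (0 : ℂ) := hU.mem_nhds (hsub (by simp))
  have hd : DifferentiableOn ℂ h U := by
    have h1 : DifferentiableOn ℂ (dslope L 0) U := (Complex.differentiableOn_dslope h0).2 hL
    fun_prop
  have hdc : DiffContOnCl ℂ h (ball 0 |1|) := by
    rw [abs_one]
    exact hd.diffContOnCl_ball hsub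
  have hci : CircleIntegrable h 0 1 :=
    (hd.continuousOn.mono (sphere_subset_closedBall.trans hsub)).circleIntegrable zero_le_one
  have hre := Complex.reCLM.circleAverage_comp_comm hci
  rw [hdc.circleAverage] at hre
  trans Real.circleAverage (Complex.reCLM ∘ h) 0 1
  · refine Real.circleAverage_congr_sphere fun z hz => ?_
    have hz1 : ‖z‖ = 1 := by simpa using hz
    have hz0 : z ≠ 0 := fun h => by simp [h] at hz1
    have hsq : z.re * z.re + z.im * z.im = 1 := by
      rw [← Complex.normSq_apply, Complex.normSq_eq_norm_sq, hz1, one_pow]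
    have hinv : z⁻¹ = (starRingEnd ℂ) z := by
      rw [Complex.inv_def, Complex.normSq_eq_norm_sq, hz1]; simp
    simp only [h, Function.comp_apply, Complex.reCLM_apply, dslope_of_ne _ hz0, slope_def_field,
      sub_zero, div_eq_mul_inv, hinv]
    simp [Complex.mul_re, Complex.mul_im]
    ring
  · rw [hre]
    simp [h, Complex.reCLM_apply]

theorem circleAverage_one_sub_re_mul_log {r : ℂ} (hr : ‖r‖ < 1) (c : ℝ) :
    Real.circleAverage (fun z => (1 - z.re) *
      (c + Real.log ‖1 + r * z‖ + Real.log ‖1 + r * (starRingEnd ℂ) z‖)) 0 1 = c - r.re := by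
  let L : ℂ → ℂ := fun z => c + Complex.log (1 + r * z) + Complex.log (1 + (starRingEnd ℂ) r * z)
  let U : Set ℂ := {z | ‖r * z‖ < 1}
  have hU : IsOpen U := isOpen_lt (by fun_prop) continuous_const
  have hsub : closedBall (0 : ℂ) 1 ⊆ U := fun z hz => by
    have hz : ‖z‖ ≤ 1 := by simpa using hz
    change ‖r * z‖ < 1
    rw [norm_mul]
    nlinarith [norm_nonneg r, norm_nonneg z]
  have hder : ∀ z ∈ U, HasDerivAt L (r / (1 + r * z) +
      (starRingEnd ℂ) r / (1 + (starRingEnd ℂ) r * z)) z := fun z hz => by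
    have h1 : HasDerivAt (fun z => Complex.log (1 + r * z)) (r / (1 + r * z)) z := by
      refine HasDerivAt.clog ?_ (Complex.mem_slitPlane_of_norm_lt_one hz)
      simpa using ((hasDerivAt_id z).const_mul r).const_add 1
    have h2 : HasDerivAt (fun z => Complex.log (1 + (starRingEnd ℂ) r * z))
        ((starRingEnd ℂ) r / (1 + (starRingEnd ℂ) r * z)) z := by
      refine HasDerivAt.clog ?_ (Complex.mem_slitPlane_of_norm_lt_one ?_)
      · simpa using ((hasDerivAt_id z).const_mul ((starRingEnd ℂ) r)).const_add 1
      · rw [norm_mul, RCLike.norm_conj, ← norm_mul]; exact hz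
    exact (h1.const_add _).add h2
  have hL : DifferentiableOn ℂ L U := fun z hz =>
    (hder z hz).differentiableAt.differentiableWithinAt
  have h := circleAverage_one_sub_re_mul_re hU hsub hL
  rw [(hder 0 (hsub (by simp))).deriv] at h
  have hE : (L 0).re - (r / (1 + r * 0) +
      (starRingEnd ℂ) r / (1 + (starRingEnd ℂ) r * 0)).re / 2 = c - r.re := by
    simp [L]
  rw [hE] at h
  rw [← h]
  congr 1
  ext z
  have : ‖1 + r * (starRingEnd ℂ) z‖ = ‖1 + (starRingEnd ℂ) r * z‖ := by
    rw [← RCLike.norm_conj]; simp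
  simp [L, Complex.log_re, this]

open Real in
theorem integral_sin_sq_mul_log {w : ℝ} (hw : 0 < w) (hw1 : w ≤ 1) :
    ∫ θ in (0 : ℝ)..π, sin θ ^ 2 * log (w ^ 2 + (1 - w ^ 2) * cos θ ^ 4) =
      π * (log (1 + w + √(2 * w * (1 + w))) - log 4 - 1 + √(2 * w * (1 + w)) / (1 + w)) := by
  let u := √w
  let A := √((1 + w) / 2)
  let B := √((1 - w) / 2)
  have hu : 0 < u := sqrt_pos.2 hw
  have hA : 0 < A := sqrt_pos.2 (by linarith)
  have hu2 : u ^ 2 = w := sq_sqrt hw.le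
  have hA2 : A ^ 2 = (1 + w) / 2 := sq_sqrt (by linarith)
  have hB2 : B ^ 2 = (1 - w) / 2 := sq_sqrt (by linarith)
  let t := √(2 * w * (1 + w))
  have ht : t = 2 * A * u := by
    have : 2 * w * (1 + w) = (2 * A * u) ^ 2 := by
      rw [mul_pow, mul_pow, hA2, hu2]; ring
    simp only [t]
    rw [this, sqrt_sq (by positivity)]
  have ht2 : t ^ 2 = 2 * w * (1 + w) := sq_sqrt (by positivity)
  have ht0 : 0 < t := by rw [ht]; positivity
  let N := 1 + w + t
  have hN : 0 < N := by positivity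
  let ω : ℂ := ⟨A, B⟩
  have hωp : Complex.normSq (ω + u) = N := by
    simp only [Complex.normSq_apply, ω, N, ht]
    simp
    linear_combination hA2 + hB2 + hu2
  have hωm : Complex.normSq (ω - u) = 1 + w - t := by
    simp only [Complex.normSq_apply, ω, ht]
    simp
    linear_combination hA2 + hB2 + hu2
  have hne : ω + u ≠ 0 := fun h => by rw [h, map_zero] at hωp; exact hN.ne hωp
  have hω2 : ω ^ 2 = ⟨w, 2 * A * B⟩ := by
    apply Complex.ext
    · simp [ω, sq]
      linear_combination hA2 - hB2
    · simp [ω, sq]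
      ring
  let r : ℂ := (ω - u) / (ω + u)
  have hr : ‖r‖ < 1 := by
    have : ‖r‖ ^ 2 < 1 := by
      rw [← Complex.normSq_eq_norm_sq, map_div₀, hωp, hωm, div_lt_one hN]
      linarith
    nlinarith [norm_nonneg r]
  have hrre : r.re = 1 - t / (1 + w) := by
    have h1 : r.re = (1 - w) / N := by
      rw [Complex.div_re, hωp, ← add_div]
      congr 1
      simp [ω]
      linear_combination hA2 + hB2 - hu2
    rw [h1]
    simp only [N]
    field_simp
    linear_combination ht2
  have hfac : ∀ z : ℂ, ‖z‖ = 1 → w ^ 2 + (1 - w ^ 2) * ((1 + z.re) / 2) ^ 2 =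
      (N / 4 * ‖1 + r * z‖ * ‖1 + r * (starRingEnd ℂ) z‖) ^ 2 := fun z hz => by
    have hzz : z * (starRingEnd ℂ) z = 1 := by
      rw [Complex.mul_conj, Complex.normSq_eq_norm_sq, hz]; simp
    have hzs : z + (starRingEnd ℂ) z = 2 * z.re := by
      rw [Complex.add_conj]; simp
    have hc : (⟨w, A * B * (1 + z.re)⟩ : ℂ) =
        ((ω + u) / 2) ^ 2 * (1 + r * z) * (1 + r * (starRingEnd ℂ) z) := by
      have hru : r * (ω + u) = ω - u := div_mul_cancel₀ _ hne
      have hu2' : (u : ℂ) ^ 2 = w := by exact_mod_cast hu2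
      have e1 : ((ω + u) / 2) ^ 2 * (1 + r * z) * (1 + r * (starRingEnd ℂ) z) =
          ((ω + u) ^ 2 + (ω + u) * (ω - u) * (z + (starRingEnd ℂ) z) +
            (ω - u) ^ 2 * (z * (starRingEnd ℂ) z)) / 4 := by
        rw [← hru]; ring
      rw [e1, hzz, hzs]
      have e2 : ((ω + u) ^ 2 + (ω + u) * (ω - u) * (2 * z.re) + (ω - u) ^ 2 * 1) / 4 =
          ((ω ^ 2 + u ^ 2) + (ω ^ 2 - u ^ 2) * z.re) / 2 := by ring
      rw [e2, hω2, hu2']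
      apply Complex.ext
      · simp
      · simp
        ring
    have hn := congrArg Complex.normSq hc
    rw [map_mul, map_mul, map_pow, map_div₀, hωp, Complex.normSq_eq_norm_sq (1 + r * z),
      Complex.normSq_eq_norm_sq (1 + r * (starRingEnd ℂ) z), Complex.normSq_ofNat] at hn
    rw [mul_pow, mul_pow, show (N / 4) ^ 2 = (N / (2 * 2)) ^ 2 by norm_num, ← hn,
      Complex.normSq_mk]
    have : A ^ 2 * B ^ 2 = (1 - w ^ 2) / 4 := by rw [hA2, hB2]; ring
    linear_combination -(1 + z.re) ^ 2 * this
  have hnz : ∀ z : ℂ, ‖z‖ = 1 → ‖1 + r * z‖ ≠ 0 := fun z hz => by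
    refine norm_ne_zero_iff.2 (Complex.slitPlane_ne_zero (Complex.mem_slitPlane_of_norm_lt_one ?_))
    rwa [norm_mul, hz, mul_one]
  have hlog : ∀ z : ℂ, ‖z‖ = 1 → log (w ^ 2 + (1 - w ^ 2) * ((1 + z.re) / 2) ^ 2) =
      2 * (log (N / 4) + log ‖1 + r * z‖ + log ‖1 + r * (starRingEnd ℂ) z‖) := fun z hz => by
    have h1 := hnz z hz
    have h2 := hnz ((starRingEnd ℂ) z) (by rwa [RCLike.norm_conj])
    rw [hfac z hz, log_pow, log_mul (by positivity) h2, log_mul (by positivity) h1]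
    push_cast; ring
  have havg := circleAverage_one_sub_re_mul_log hr (log (N / 4))
  rw [Real.circleAverage_def, smul_eq_mul, inv_mul_eq_iff_eq_mul₀ (by positivity)] at havg
  have hsub := intervalIntegral.mul_integral_comp_mul_left (a := 0) (b := π) (c := 2)
    (f := fun φ => (1 - (circleMap 0 1 φ).re) * (log (N / 4) + log ‖1 + r * circleMap 0 1 φ‖ +
      log ‖1 + r * (starRingEnd ℂ) (circleMap 0 1 φ)‖))
  rw [mul_zero, havg] at hsub
  have hcongr : ∀ θ : ℝ, sin θ ^ 2 * log (w ^ 2 + (1 - w ^ 2) * cos θ ^ 4) =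
      (1 - (circleMap 0 1 (2 * θ)).re) * (log (N / 4) + log ‖1 + r * circleMap 0 1 (2 * θ)‖ +
      log ‖1 + r * (starRingEnd ℂ) (circleMap 0 1 (2 * θ))‖) := fun θ => by
    have hz : ‖circleMap 0 1 (2 * θ)‖ = 1 := by simp
    have hre : (circleMap 0 1 (2 * θ)).re = cos (2 * θ) := by
      rw [circleMap]
      simp only [zero_add, Complex.ofReal_one, one_mul]
      exact Complex.exp_ofReal_mul_I_re _
    have hc4 : cos θ ^ 4 = ((1 + (circleMap 0 1 (2 * θ)).re) / 2) ^ 2 := by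
      rw [hre, cos_two_mul]; ring
    rw [hc4, hlog _ hz, hre, cos_two_mul, sin_sq]
    ring
  simp only [hcongr]
  rw [hrre] at hsub
  linear_combination hsub / 2 + π * log_div hN.ne' four_ne_zero

open Real in
theorem hasDerivAt_angular_primitive {β : ℝ} (hβ : β ∈ Ioo 0 (π / 2)) :
    HasDerivAt (fun β => cos β * (log 4 + 2 - log (1 + sin β + √(2 * sin β * (1 + sin β)))) +
        2 * arcsin (√(2 * sin β * (1 + sin β)) / (1 + sin β)) - √(2 * sin β * (1 - sin β)))
      (sin β * (log (1 + sin β + √(2 * sin β * (1 + sin β))) - log 4 - 1 +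
        √(2 * sin β * (1 + sin β)) / (1 + sin β))) β := by
  have hw : 0 < sin β := sin_pos_of_pos_of_lt_pi hβ.1 (by linarith [hβ.2, pi_pos])
  have hc : 0 < cos β := cos_pos_of_mem_Ioo ⟨by linarith [hβ.1, pi_pos], hβ.2⟩
  have hcw : cos β ^ 2 = 1 - sin β ^ 2 := by linarith [sin_sq_add_cos_sq β]
  have hw1 : sin β < 1 := by nlinarith
  have ht2 : √(2 * sin β * (1 + sin β)) ^ 2 = 2 * sin β * (1 + sin β) := sq_sqrt (by positivity)
  have ht : 0 < √(2 * sin β * (1 + sin β)) := sqrt_pos.2 (by positivity)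
  have hv : √(2 * sin β * (1 - sin β)) =
      cos β * √(2 * sin β * (1 + sin β)) / (1 + sin β) := by
    rw [sqrt_eq_iff_mul_self_eq (by nlinarith) (by positivity)]
    field_simp
    rw [hcw, ht2]
    ring
  have hq : √(1 - (√(2 * sin β * (1 + sin β)) / (1 + sin β)) ^ 2) = cos β / (1 + sin β) := by
    rw [sqrt_eq_iff_mul_self_eq_of_pos (by positivity), div_pow, ht2, ← sq, div_pow, hcw]
    field_simp
    ring
  have hy1 : √(2 * sin β * (1 + sin β)) / (1 + sin β) < 1 := by
    rw [div_lt_one (by positivity), sqrt_lt' (by positivity)]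
    nlinarith
  have hs := hasDerivAt_sin β
  have dt : HasDerivAt (fun β => √(2 * sin β * (1 + sin β)))
      ((2 * cos β * (1 + sin β) + 2 * sin β * cos β) / (2 * √(2 * sin β * (1 + sin β)))) β :=
    ((hs.const_mul 2).mul (hs.const_add 1)).sqrt (sqrt_pos.1 ht).ne'
  have dv : HasDerivAt (fun β => √(2 * sin β * (1 - sin β)))
      ((2 * cos β * (1 - sin β) + 2 * sin β * -cos β) / (2 * √(2 * sin β * (1 - sin β)))) β :=
    ((hs.const_mul 2).mul (hs.const_sub 1)).sqrt
      (mul_pos (mul_pos two_pos hw) (sub_pos.2 hw1)).ne'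
  have dN := ((hs.const_add 1).add dt).log
    (show 1 + sin β + √(2 * sin β * (1 + sin β)) ≠ 0 by positivity)
  have dy := dt.div (hs.const_add 1) (by positivity)
  have hy0 : 0 < √(2 * sin β * (1 + sin β)) / (1 + sin β) := by positivity
  have da := (hasDerivAt_arcsin (by linarith) hy1.ne).comp β dy
  have dP := (((hasDerivAt_cos β).mul (dN.const_sub (log 4 + 2))).add (da.const_mul 2)).sub dv
  refine dP.congr_deriv ?_
  simp only [Pi.add_apply]
  rw [hq, hv]
  generalize √(2 * sin β * (1 + sin β)) = t at *
  generalize log (1 + sin β + t) = l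
  generalize cos β = c at *
  generalize sin β = w at *
  have hN : 1 + w + t ≠ 0 := by positivity
  have h1w : 1 + w ≠ 0 := by positivity
  field_simp
  grind

open Real in
theorem continuousOn_angular :
    ContinuousOn (fun β => sin β * (log (1 + sin β + √(2 * sin β * (1 + sin β))) - log 4 - 1 +
      √(2 * sin β * (1 + sin β)) / (1 + sin β))) (Icc 0 π) := by
  have hsin : ∀ β ∈ Icc 0 π, 0 ≤ sin β := fun β hβ => sin_nonneg_of_nonneg_of_le_pi hβ.1 hβ.2
  have hN : ∀ β ∈ Icc 0 π, 1 + sin β + √(2 * sin β * (1 + sin β)) ≠ 0 := fun β hβ => by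
    have := hsin β hβ
    positivity
  have h1 : ∀ β ∈ Icc 0 π, 1 + sin β ≠ 0 := fun β hβ => by
    have := hsin β hβ
    positivity
  fun_prop (disch := assumption)

open Real in
theorem integral_angular :
    ∫ β in (0 : ℝ)..π, sin β * (log (1 + sin β + √(2 * sin β * (1 + sin β))) - log 4 - 1 +
        √(2 * sin β * (1 + sin β)) / (1 + sin β)) = 2 * (π - 2 - log 4) := by
  let I : ℝ → ℝ := fun β => sin β * (log (1 + sin β + √(2 * sin β * (1 + sin β))) - log 4 - 1 +
        √(2 * sin β * (1 + sin β)) / (1 + sin β))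
  have hsin : ∀ β ∈ Icc 0 π, 0 ≤ sin β := fun β hβ => sin_nonneg_of_nonneg_of_le_pi hβ.1 hβ.2
  have hN : ∀ β ∈ Icc 0 π, 1 + sin β + √(2 * sin β * (1 + sin β)) ≠ 0 := fun β hβ => by
    have := hsin β hβ
    positivity
  have h1 : ∀ β ∈ Icc 0 π, 1 + sin β ≠ 0 := fun β hβ => by
    have := hsin β hβ
    positivity
  have hI : ContinuousOn I (Icc 0 π) := continuousOn_angular
  have hsub : Icc 0 (π / 2) ⊆ Icc 0 π := Icc_subset_Icc_right (by linarith [pi_pos])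
  have hsub' : Icc (π / 2) π ⊆ Icc 0 π := Icc_subset_Icc_left (by linarith [pi_pos])
  have hi1 : IntervalIntegrable I volume 0 (π / 2) :=
    (hI.mono hsub).intervalIntegrable_of_Icc (by positivity)
  have hi2 : IntervalIntegrable I volume (π / 2) π :=
    (hI.mono hsub').intervalIntegrable_of_Icc (by linarith [pi_pos])
  have hhalf : ∫ β in (0 : ℝ)..(π / 2), I β = π - 2 - log 4 := by
    rw [intervalIntegral.integral_eq_sub_of_hasDerivAt_of_le (by positivity) ?_
      (fun β hβ => hasDerivAt_angular_primitive hβ) hi1]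
    · rw [sin_pi_div_two, cos_pi_div_two, sin_zero, cos_zero,
        show (2 : ℝ) * 1 * (1 + 1) = 2 ^ 2 by norm_num, sqrt_sq (by norm_num)]
      norm_num
      ring
    · have := ContinuousOn.log (f := fun β => 1 + sin β + √(2 * sin β * (1 + sin β)))
        (by fun_prop) fun β hβ => hN β (hsub hβ)
      have := continuous_arcsin.comp_continuousOn
        (ContinuousOn.div (f := fun β => √(2 * sin β * (1 + sin β))) (g := fun β => 1 + sin β)
          (s := Icc 0 (π / 2)) (by fun_prop) (by fun_prop) fun β hβ => h1 β (hsub hβ))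
      simp only [Function.comp_def, Pi.div_apply] at this
      fun_prop
  have hrefl : ∫ β in (π / 2)..π, I β = ∫ β in (0 : ℝ)..(π / 2), I β := by
    have h := intervalIntegral.integral_comp_sub_left (a := 0) (b := π / 2) I π
    rw [sub_zero, show π - π / 2 = π / 2 by ring] at h
    rw [← h]
    simp only [I, sin_pi_sub]
  change ∫ β in (0 : ℝ)..π, I β = _
  rw [← intervalIntegral.integral_add_adjacent_intervals hi1 hi2, hrefl, hhalf]
  ring

theorem unit_coord_sq_sum (q : sphere (0 : ℍ) 1) :
    (q : ℍ).re ^ 2 + (q : ℍ).imI ^ 2 + (q : ℍ).imJ ^ 2 + (q : ℍ).imK ^ 2 = 1 := by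
  rw [← Quaternion.normSq_def', Quaternion.normSq_eq_norm_mul_self,
    norm_eq_of_mem_sphere q, one_mul]

theorem norm_sq_star_polynomial (q : sphere (0 : ℍ) 1) :
    ‖(q : ℍ) ^ 2 - q * (qI + qJ) + qK‖ ^ 2 =
      4 + 4 * (-(q : ℍ).imI + (q : ℍ).re * (q : ℍ).imK) := by
  have hq := unit_coord_sq_sum q
  rw [sq ‖_‖, ← Quaternion.normSq_eq_norm_mul_self, Quaternion.normSq_def']
  generalize (q : ℍ) = p at *
  have hI : qI.re = 0 ∧ qI.imI = 1 ∧ qI.imJ = 0 ∧ qI.imK = 0 := ⟨rfl, rfl, rfl, rfl⟩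
  have hJ : qJ.re = 0 ∧ qJ.imI = 0 ∧ qJ.imJ = 1 ∧ qJ.imK = 0 := ⟨rfl, rfl, rfl, rfl⟩
  have hK : qK.re = 0 ∧ qK.imI = 0 ∧ qK.imJ = 0 ∧ qK.imK = 1 := ⟨rfl, rfl, rfl, rfl⟩
  simp only [sq p, Quaternion.re_add, Quaternion.imI_add, Quaternion.imJ_add, Quaternion.imK_add,
    Quaternion.re_sub, Quaternion.imI_sub, Quaternion.imJ_sub, Quaternion.imK_sub,
    Quaternion.re_mul, Quaternion.imI_mul, Quaternion.imJ_mul, Quaternion.imK_mul, hI, hJ, hK]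
  generalize p.re = a at *
  generalize p.imI = b at *
  generalize p.imJ = c at *
  generalize p.imK = d at *
  grind

open Real in
theorem lintegral_log_defect :
    ∫⁻ q : sphere (0 : ℍ) 1, ENNReal.ofReal
      (log 8 - log (4 + 4 * (-(q : ℍ).imI + (q : ℍ).re * (q : ℍ).imK))) ∂muH =
      ENNReal.ofReal (3 * log 2 - π + 2) := by
  let l : ℝ → ℝ≥0∞ := fun x => ENNReal.ofReal (log 8 - log (4 + 4 * x))
  have hl : Measurable l := by fun_prop
  have hG : Measurable (Function.uncurry fun a b : ℝ => l (-(√(1 + a ^ 2) * b))) := by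
    simp only [Function.uncurry_def]
    fun_prop
  change ∫⁻ q : sphere (0 : ℍ) 1, l (-(q : ℍ).imI + (q : ℍ).re * (q : ℍ).imK) ∂muH = _
  rw [lintegral_muH_comp_replace hl]
  have hsph := lintegral_muH_spherical hG
  set E := ∫⁻ q : sphere (0 : ℍ) 1, l (-(√(1 + (q : ℍ).re ^ 2) * (q : ℍ).imI)) ∂muH
  let T : ℝ → ℝ → ℝ := fun β θ => sin θ ^ 2 *
    (log 4 - log (sin β ^ 2 + (1 - sin β ^ 2) * cos θ ^ 4))
  have hsum : ∀ θ, 2 * ∫⁻ β in Ioo 0 π,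
        ENNReal.ofReal (sin θ ^ 2 * sin β) * l (-(√(1 + cos θ ^ 2) * (sin θ * cos β))) =
      ∫⁻ β in Ioo 0 π, ENNReal.ofReal (sin β) * ENNReal.ofReal (T β θ) := fun θ => by
    have hrefl : ∫⁻ β in Ioo 0 π,
        ENNReal.ofReal (sin θ ^ 2 * sin β) * l (-(√(1 + cos θ ^ 2) * (sin θ * cos β))) =
        ∫⁻ β in Ioo 0 π,
        ENNReal.ofReal (sin θ ^ 2 * sin β) * l (√(1 + cos θ ^ 2) * (sin θ * cos β)) := by
      have hmp := (Measure.measurePreserving_sub_left (volume : Measure ℝ) π)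
        |>.setLIntegral_comp_preimage (s := Ioo 0 π) measurableSet_Ioo (f := fun β =>
          ENNReal.ofReal (sin θ ^ 2 * sin β) * l (-(√(1 + cos θ ^ 2) * (sin θ * cos β))))
          (by fun_prop)
      rw [← hmp]
      simp
    rw [two_mul]
    nth_rewrite 2 [hrefl]
    rw [← lintegral_add_left (by fun_prop)]
    refine setLIntegral_congr_fun measurableSet_Ioo fun β hβ => ?_
    have hsb : 0 < sin β := sin_pos_of_pos_of_lt_pi hβ.1 hβ.2
    set X := √(1 + cos θ ^ 2) * (sin θ * cos β) with hX
    have hX2 : 1 - X ^ 2 = sin β ^ 2 + (1 - sin β ^ 2) * cos θ ^ 4 := by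
      rw [hX, mul_pow, mul_pow, sq_sqrt (by positivity), cos_sq' β, sin_sq θ]
      ring
    have hpos : 0 < 1 - X ^ 2 := by
      rw [hX2, ← cos_sq']
      positivity
    have hX1 : -1 < X ∧ X < 1 := abs_lt.1 ((sq_lt_one_iff_abs_lt_one X).1 (by linarith))
    have hle : ∀ x : ℝ, -1 < x → x < 1 → 0 ≤ log 8 - log (4 + 4 * x) := fun x h1 h2 =>
      sub_nonneg.2 (log_le_log (by linarith) (by linarith))
    have hlog : log 8 - log (4 + 4 * -X) + (log 8 - log (4 + 4 * X)) =
        log 4 - log (sin β ^ 2 + (1 - sin β ^ 2) * cos θ ^ 4) := by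
      have h1 : log (4 + 4 * -X) + log (4 + 4 * X) = log 16 + log (1 - X ^ 2) := by
        rw [← log_mul (by linarith) (by linarith), ← log_mul (by norm_num) hpos.ne']
        congr 1
        ring
      have h2 : log 8 + log 8 = log 4 + log 16 := by
        rw [← log_mul (by norm_num) (by norm_num), ← log_mul (by norm_num) (by norm_num)]
        norm_num
      rw [← hX2]
      linarith
    rw [← mul_add, ← ENNReal.ofReal_add (hle _ (by linarith) (by linarith)) (hle _ hX1.1 hX1.2),
      hlog, ← ENNReal.ofReal_mul (by positivity), ← ENNReal.ofReal_mul hsb.le]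
    congr 1
    simp only [T]
    ring
  let V : ℝ → ℝ := fun β => π * (log 2 - (log (1 + sin β + √(2 * sin β * (1 + sin β))) - log 4 - 1 +
        √(2 * sin β * (1 + sin β)) / (1 + sin β)))
  have hT : Measurable fun p : ℝ × ℝ => T p.2 p.1 := by
    simp only [T]
    fun_prop
  have hinner : ∀ β ∈ Ioo 0 π, 0 ≤ V β ∧
      ∫⁻ θ in Ioo 0 π, ENNReal.ofReal (T β θ) = ENNReal.ofReal (V β) := fun β hβ => by
    have hsb : 0 < sin β := sin_pos_of_pos_of_lt_pi hβ.1 hβ.2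
    have hpos : ∀ θ, 0 < sin β ^ 2 + (1 - sin β ^ 2) * cos θ ^ 4 := fun θ => by
      rw [← cos_sq']
      positivity
    have hc : Continuous fun θ => log (sin β ^ 2 + (1 - sin β ^ 2) * cos θ ^ 4) :=
      Continuous.log (by fun_prop) fun θ => (hpos θ).ne'
    have hTc : Continuous (T β) := by
      simp only [T]
      fun_prop
    have hT0 : ∀ θ, 0 ≤ T β θ := fun θ => by
      refine mul_nonneg (sq_nonneg _) (sub_nonneg.2 (log_le_log (hpos θ) ?_))
      have h1 : cos θ ^ 4 ≤ 1 := by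
        have := cos_sq_le_one θ
        nlinarith [sq_nonneg (cos θ)]
      have h2 := sin_sq_le_one β
      nlinarith
    have hint : ∫ θ in (0 : ℝ)..π, T β θ = V β := by
      have h := integral_sin_sq_mul_log hsb (sin_le_one β)
      have hl4 : log 4 = 2 * log 2 := by
        rw [show (4 : ℝ) = 2 ^ 2 by norm_num, log_pow]
        norm_num
      simp only [T, mul_sub]
      rw [intervalIntegral.integral_sub (Continuous.intervalIntegrable (by fun_prop) _ _)
        (Continuous.intervalIntegrable (by fun_prop) _ _), h, intervalIntegral.integral_mul_const,
        integral_sin_sq]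
      simp only [V, sin_zero, sin_pi, hl4]
      ring
    refine ⟨hint ▸ intervalIntegral.integral_nonneg pi_pos.le fun θ _ => hT0 θ, ?_⟩
    rw [← hint, intervalIntegral.integral_of_le pi_pos.le, integral_Ioc_eq_integral_Ioo,
      ofReal_integral_eq_lintegral_ofReal]
    · exact hTc.integrableOn_Icc.mono_set Ioo_subset_Icc_self
    · exact Filter.Eventually.of_forall hT0
  have hI := continuousOn_angular.intervalIntegrable_of_Icc (μ := volume) pi_pos.le
  have hV : ∀ β, sin β * V β = π * (log 2 * sin β - sin β *
      (log (1 + sin β + √(2 * sin β * (1 + sin β))) - log 4 - 1 +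
        √(2 * sin β * (1 + sin β)) / (1 + sin β))) := fun β => by
    simp only [V]
    ring
  have hs : IntervalIntegrable (fun β => log 2 * sin β) volume 0 π :=
    Continuous.intervalIntegrable (by fun_prop) _ _
  have hVi : IntervalIntegrable (fun β => sin β * V β) volume 0 π := by
    simp only [hV]
    exact (hs.sub hI).const_mul π
  have hl4 : log 4 = 2 * log 2 := by
    rw [show (4 : ℝ) = 2 ^ 2 by norm_num, log_pow]
    norm_num
  have hVint : ∫ β in (0 : ℝ)..π, sin β * V β = 2 * π * (3 * log 2 - π + 2) := by
    simp only [hV]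
    rw [intervalIntegral.integral_const_mul, intervalIntegral.integral_sub hs hI,
      intervalIntegral.integral_const_mul, integral_sin, integral_angular, hl4, cos_zero, cos_pi]
    ring
  have hm : ∀ θ, Measurable fun β => ENNReal.ofReal (T β θ) := fun θ =>
    (hT.comp (measurable_prodMk_left (x := θ))).ennreal_ofReal
  have htot : ENNReal.ofReal (2 * π) * E =
      ENNReal.ofReal (2 * π) * ENNReal.ofReal (3 * log 2 - π + 2) := by
    rw [ENNReal.ofReal_mul two_pos.le, ENNReal.ofReal_ofNat, mul_assoc, hsph,
      ← lintegral_const_mul' _ _ ENNReal.ofNat_ne_top]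
    simp only [hsum]
    rw [lintegral_lintegral_swap (by fun_prop)]
    trans ∫⁻ β in Ioo 0 π, ENNReal.ofReal (sin β * V β)
    · refine setLIntegral_congr_fun measurableSet_Ioo fun β hβ => ?_
      rw [lintegral_const_mul' _ _ ENNReal.ofReal_ne_top, (hinner β hβ).2,
        ← ENNReal.ofReal_mul (sin_pos_of_pos_of_lt_pi hβ.1 hβ.2).le]
    · rw [← ofReal_integral_eq_lintegral_ofReal, ← integral_Ioc_eq_integral_Ioo,
        ← intervalIntegral.integral_of_le pi_pos.le, hVint,
        ENNReal.ofReal_mul (by positivity), ENNReal.ofReal_mul two_pos.le, ENNReal.ofReal_ofNat,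
        mul_assoc]
      · exact ((intervalIntegrable_iff_integrableOn_Ioo_of_le pi_pos.le).1 hVi)
      · filter_upwards [ae_restrict_mem measurableSet_Ioo] with β hβ
        exact mul_nonneg (sin_pos_of_pos_of_lt_pi hβ.1 hβ.2).le (hinner β hβ).1
  exact (ENNReal.mul_right_inj (by simp [pi_pos]) ENNReal.ofReal_ne_top).1 htot

/-- `m_ℍ((x - i) ∗ (x - j)) = π/2 - 1`. -/
theorem mahlerH_star_sub_i_sub_j :
    mahlerH (fun q => q ^ 2 - q * (qI + qJ) + qK) = Real.pi / 2 - 1 := by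
  let h : sphere (0 : ℍ) 1 → ℝ := fun q =>
    Real.log (4 + 4 * (-(q : ℍ).imI + (q : ℍ).re * (q : ℍ).imK))
  have hlog : ∀ q : sphere (0 : ℍ) 1,
      Real.log ‖(q : ℍ) ^ 2 - q * (qI + qJ) + qK‖ = h q / 2 := fun q => by
    simp only [h]
    rw [← norm_sq_star_polynomial, Real.log_pow]
    push_cast
    ring
  have hm : Measurable h := by
    have hre : Continuous fun q : sphere (0 : ℍ) 1 => (q : ℍ).re :=
      Quaternion.continuous_re.comp continuous_subtype_val
    have hI : Continuous fun q : sphere (0 : ℍ) 1 => (q : ℍ).imI :=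
      Quaternion.continuous_imI.comp continuous_subtype_val
    have hK : Continuous fun q : sphere (0 : ℍ) 1 => (q : ℍ).imK :=
      Quaternion.continuous_imK.comp continuous_subtype_val
    exact Real.measurable_log.comp (Continuous.measurable (by fun_prop))
  have hle : ∀ q, 0 ≤ Real.log 8 - h q := fun q => by
    have hq := unit_coord_sq_sum q
    have h0 : 0 ≤ 4 + 4 * (-(q : ℍ).imI + (q : ℍ).re * (q : ℍ).imK) :=
      norm_sq_star_polynomial q ▸ sq_nonneg _
    have h8 : 4 + 4 * (-(q : ℍ).imI + (q : ℍ).re * (q : ℍ).imK) ≤ 8 := by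
      nlinarith [sq_nonneg ((q : ℍ).re - (q : ℍ).imK), sq_nonneg (1 + (q : ℍ).imI),
        sq_nonneg (q : ℍ).imJ]
    rcases h0.eq_or_lt with h0 | h0
    · simp only [h, ← h0, Real.log_zero, sub_zero]
      exact Real.log_nonneg (by norm_num)
    · exact sub_nonneg.2 (Real.log_le_log h0 h8)
  have hl8 : Real.log 8 = 3 * Real.log 2 := by
    rw [show (8 : ℝ) = 2 ^ 3 by norm_num, Real.log_pow]
    norm_num
  have hlint : ∫⁻ q, ENNReal.ofReal (Real.log 8 - h q) ∂muH = _ := lintegral_log_defect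
  have hint : Integrable (fun q => Real.log 8 - h q) muH := by
    refine ⟨(measurable_const.sub hm).aestronglyMeasurable, ?_⟩
    rw [hasFiniteIntegral_iff_ofReal (Filter.Eventually.of_forall hle), hlint]
    exact ENNReal.ofReal_lt_top
  have hval : ∫ q, (Real.log 8 - h q) ∂muH = 3 * Real.log 2 - Real.pi + 2 := by
    rw [integral_eq_lintegral_of_nonneg_ae (Filter.Eventually.of_forall hle)
      (measurable_const.sub hm).aestronglyMeasurable, hlint, ENNReal.toReal_ofReal]
    linarith [Real.log_two_gt_d9, Real.pi_lt_d2]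
  have hfin : ∀ q, h q / 2 = (Real.log 8 - (Real.log 8 - h q)) / 2 := fun q => by ring
  unfold mahlerH
  simp only [hlog]
  simp only [hfin]
  rw [integral_div, integral_sub (integrable_const _) hint, hval, integral_const, probReal_univ,
    one_smul, hl8]
  ring
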